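/- Let p > 1 with 1/p + 1/q = 1, and let f, g be two positive continuous functions on [0, ∞) such that for x > 0 the integral I^{α,β,η,μ}_{x,k}[f] is finite. If f(τ)/g(τ) ≤ M for all τ ∈ (0, x) with M > 0, then I^{α,β,η,μ}_{x,k}[f^{1/p} g^{1/q}] ≥ M^{−1/q} · I^{α,β,η,μ}_{x,k}[f]. -/

import Mathlib

/-!
On `(0, x)` the kernel is nonnegative, because under the parameter assumptions every term of the
hypergeometric series is (`Fker_nonneg`). Since `f ≤ M g` there, `g ^ (1/q) ≥ M ^ (-1/q) f ^ (1/q)`,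
hence `f ^ (1/p) g ^ (1/q) ≥ M ^ (-1/q) f` pointwise, and the claim follows by monotonicity of the
integral. Integrability of the larger side holds because `f ^ (1/p) g ^ (1/q) / f` is continuous on
the compact interval `[0, x]`, so it may be multiplied into the integrable function `F τ ^ k f`.
-/

open MeasureTheory Real Set

/-- The Gauss hypergeometric series `₂F₁(a, b; c; z)`. -/
noncomputable def gauss2F1 (a b c z : ℝ) : ℝ :=
  ∑' n : ℕ, ((ascPochhammer ℝ n).eval a * (ascPochhammer ℝ n).eval b /
    ((ascPochhammer ℝ n).eval c * (n.factorial : ℝ))) * z ^ n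

/-- The kernel `F(x, τ)` of the generalized k-fractional integral operator. -/
noncomputable def Fker (α β η μ k x τ : ℝ) : ℝ :=
  ((k + 1) ^ (μ + β + 1) * x ^ ((k + 1) * (-α - β - 2 * μ)) / Real.Gamma α) *
    τ ^ ((k + 1) * μ) * (x ^ (k + 1) - τ ^ (k + 1)) ^ (α - 1) *
    gauss2F1 (α + β + μ) (-η) α (1 - (τ / x) ^ (k + 1))

/-- The generalized k-fractional integral operator `I^{α,β,η,μ}_{x,k}[f]`. -/
noncomputable def genKInt (α β η μ k x : ℝ) (f : ℝ → ℝ) : ℝ :=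
  ∫ τ in (0:ℝ)..x, Fker α β η μ k x τ * τ ^ k * f τ

lemma gauss2F1_nonneg {a b c z : ℝ} (ha : 0 < a) (hb : 0 < b) (hc : 0 < c) (hz : 0 ≤ z) :
    0 ≤ gauss2F1 a b c z := by
  refine tsum_nonneg fun n => ?_
  have h1 := ascPochhammer_pos n a ha
  have h2 := ascPochhammer_pos n b hb
  have h3 := ascPochhammer_pos n c hc
  positivity

lemma Fker_nonneg {α β η μ k x τ : ℝ} (hk : 0 ≤ k) (hα : max 0 (-β - μ) < α)
    (hη : η < 0) (hτ : τ ∈ Ioo (0 : ℝ) x) : 0 ≤ Fker α β η μ k x τ := by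
  obtain ⟨hτ0, hτx⟩ := hτ
  have hx : 0 < x := hτ0.trans hτx
  obtain ⟨hα0, hα1⟩ := max_lt_iff.1 hα
  have hG := Real.Gamma_pos_of_pos hα0
  have h1 : 0 ≤ x ^ (k + 1) - τ ^ (k + 1) :=
    sub_nonneg.2 (Real.rpow_le_rpow hτ0.le hτx.le (by linarith))
  have h2 : 0 ≤ 1 - (τ / x) ^ (k + 1) :=
    sub_nonneg.2 (Real.rpow_le_one (by positivity) ((div_le_one hx).2 hτx.le) (by linarith))
  have h3 : 0 ≤ gauss2F1 (α + β + μ) (-η) α (1 - (τ / x) ^ (k + 1)) :=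
    gauss2F1_nonneg (by linarith) (by linarith) hα0 h2
  unfold Fker
  positivity

lemma rpow_mixed_lower_bound {u v M r s : ℝ} (hu : 0 < u) (hv : 0 < v) (hM : 0 < M)
    (hs : 0 ≤ s) (hrs : r + s = 1) (h : u / v ≤ M) :
    M ^ (-s) * u ≤ u ^ r * v ^ s := by
  have h1 : u / M ≤ v := by
    rw [div_le_iff₀ hv] at h
    rw [div_le_iff₀ hM]
    linarith
  calc M ^ (-s) * u = u ^ r * (u / M) ^ s := by
        rw [Real.div_rpow hu.le hM.le, Real.rpow_neg hM.le, mul_div_assoc', ← Real.rpow_add hu,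
          hrs, Real.rpow_one]
        ring
    _ ≤ u ^ r * v ^ s := by gcongr

theorem lower_bound_mixed_f (α β η μ k x : ℝ)
    (hk : 0 ≤ k) (hα : max 0 (-β - μ) < α) (hβ : β < 1) (hμ : -1 < μ)
    (hη1 : β - 1 < η) (hη2 : η < 0) (hx : 0 < x) (p q M : ℝ) (f g : ℝ → ℝ)
    (hfc : ContinuousOn f (Ici 0)) (hgc : ContinuousOn g (Ici 0))
    (hfpos : ∀ t ∈ Ici (0:ℝ), 0 < f t) (hgpos : ∀ t ∈ Ici (0:ℝ), 0 < g t)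
    (hp : 1 < p) (hpq : 1 / p + 1 / q = 1) (hM : 0 < M)
    (hfin : IntervalIntegrable (fun τ => Fker α β η μ k x τ * τ ^ k * (f τ)) volume 0 x)
    (hbd : ∀ τ ∈ Ioo (0:ℝ) x, f τ / g τ ≤ M) :
    M ^ (-1 / q) * (genKInt α β η μ k x (fun τ => f τ)) ≤
      genKInt α β η μ k x (fun τ => f τ ^ (1 / p) * g τ ^ (1 / q)) := by
  have hq : 0 ≤ 1 / q := by
    have : 1 / p < 1 := (div_lt_one (by linarith)).2 hp
    linarith
  have hsub : uIcc 0 x ⊆ Ici (0 : ℝ) := by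
    rw [uIcc_of_le hx.le]
    exact Icc_subset_Ici_self
  have hfc' := hfc.mono hsub
  have hgc' := hgc.mono hsub
  have hratio : ContinuousOn (fun τ => f τ ^ (1 / p) * g τ ^ (1 / q) / f τ) (uIcc 0 x) :=
    ((hfc'.rpow_const fun t ht => Or.inl (hfpos t (hsub ht)).ne').mul
      (hgc'.rpow_const fun t ht => Or.inl (hgpos t (hsub ht)).ne')).div hfc'
      fun t ht => (hfpos t (hsub ht)).ne'
  have hint : IntervalIntegrable
      (fun τ => Fker α β η μ k x τ * τ ^ k * (f τ ^ (1 / p) * g τ ^ (1 / q))) volume 0 x := by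
    refine (hfin.mul_continuousOn hratio).congr fun τ hτ => ?_
    have := (hfpos τ (hsub (uIoc_subset_uIcc hτ))).ne'
    field_simp
  unfold genKInt
  rw [← intervalIntegral.integral_const_mul]
  refine intervalIntegral.integral_mono_on_of_le_Ioo hx.le (hfin.const_mul _) hint fun τ hτ => ?_
  have hK := Fker_nonneg hk hα hη2 hτ
  have hτk : 0 ≤ τ ^ k := Real.rpow_nonneg hτ.1.le k
  have hpt := rpow_mixed_lower_bound (hfpos τ hτ.1.le) (hgpos τ hτ.1.le) hM hq hpq (hbd τ hτ)
  rw [neg_div]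
  calc _ = Fker α β η μ k x τ * τ ^ k * (M ^ (-(1 / q)) * f τ) := by ring
    _ ≤ _ := mul_le_mul_of_nonneg_left hpt (mul_nonneg hK hτk)
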